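/- Let F be a field, a, b ∈ F with a ≠ 0, b ≠ 0 and ab − b + 1 ≠ 0, and let x, y ∈ F with B(x) ≠ 0 and A(y) ≠ 0. Then the two-variable function 1 − μx/(A(y)B(x)) transforms under the involution ρ applied to the x-variable into (y−x)/A(y); that is, 1 − μ·ρ(x)/(A(y)·B(ρ(x))) = (y − x)/A(y), where ρ(x) = −A(x)/B(x). -/

import Mathlib

/-- A(x) = (a·x − a + 1)/a -/
def Af {F : Type*} [Field F] (a x : F) : F := (a * x - a + 1) / a

/-- B(x) = b·x − x + 1 -/
def Bf {F : Type*} [Field F] (b x : F) : F := b * x - x + 1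

/-- μ = −(a·b − b + 1)/a -/
def muf {F : Type*} [Field F] (a b : F) : F := -(a * b - b + 1) / a

/-- k(x) = B(x)/(a·b·x·A(x)) -/
def kf {F : Type*} [Field F] (a b x : F) : F := Bf b x / (a * b * x * Af a x)

/-- ρ(x) = −A(x)/B(x) -/
def rhof {F : Type*} [Field F] (a b x : F) : F := -(Af a x) / Bf b x

/-- σ(x) = −x/B(x) -/
def sigf {F : Type*} [Field F] (b x : F) : F := -x / Bf b x

section

variable {F : Type*} [Field F] {a b x : F}

theorem muf_ne_zero (ha : a ≠ 0) (hab : a * b - b + 1 ≠ 0) : muf a b ≠ 0 :=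
  div_ne_zero (neg_ne_zero.mpr hab) ha

theorem Af_sub_Af (ha : a ≠ 0) (x y : F) : Af a y - Af a x = y - x := by
  simp only [Af]
  field_simp
  ring

theorem Bf_sub_mul_Af (ha : a ≠ 0) (b x : F) : Bf b x - (b - 1) * Af a x = -muf a b := by
  simp only [Af, Bf, muf]
  field_simp
  ring

theorem Bf_rhof (ha : a ≠ 0) (hBx : Bf b x ≠ 0) : Bf b (rhof a b x) = -muf a b / Bf b x :=
  calc
    Bf b (rhof a b x) = (b - 1) * (-Af a x / Bf b x) + 1 := by
      simp only [rhof, Bf]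
      ring
    _ = (Bf b x - (b - 1) * Af a x) / Bf b x := by
      field_simp
      ring
    _ = -muf a b / Bf b x := by rw [Bf_sub_mul_Af ha]

theorem muf_mul_rhof_div_Bf_rhof (ha : a ≠ 0) (hab : a * b - b + 1 ≠ 0) (hBx : Bf b x ≠ 0) :
    muf a b * rhof a b x / Bf b (rhof a b x) = Af a x := by
  have hμ : muf a b ≠ 0 := muf_ne_zero ha hab
  rw [Bf_rhof ha hBx, rhof]
  field_simp

end

/-- 1 − μ·ρ(x)/(A(y)·B(ρ(x))) = (y − x)/A(y). -/
theorem stmt_6 {F : Type*} [Field F] (a b : F) (ha : a ≠ 0) (hb : b ≠ 0)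
    (hab : a * b - b + 1 ≠ 0) (x y : F) (hBx : Bf b x ≠ 0) (hAy : Af a y ≠ 0) :
    1 - muf a b * rhof a b x / (Af a y * Bf b (rhof a b x)) = (y - x) / Af a y :=
  calc
    1 - muf a b * rhof a b x / (Af a y * Bf b (rhof a b x)) = 1 - Af a x / Af a y := by
      rw [mul_comm (Af a y), ← div_div, muf_mul_rhof_div_Bf_rhof ha hab hBx]
    _ = (Af a y - Af a x) / Af a y := one_sub_div hAy
    _ = (y - x) / Af a y := by rw [Af_sub_Af ha]
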